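/- Let G_0 be an acyclic graph on [n+1] with d edges, let (i,j), (j,k) ∈ E(G_0) with i < j < k, and let G_1, G_2, G_3 be the graphs produced by the reduction of G_0 at this pair. Then G_1, G_2, G_3 are acyclic; P(G_0) = P(G_1) ∪ P(G_2), where P(G_0), P(G_1), P(G_2) are all d-dimensional polytopes; and P(G_3) = P(G_1) ∩ P(G_2) is a (d−1)-dimensional polytope. -/

import Mathlib

open scoped BigOperators

namespace RPaper

abbrev Vtype (n : ℕ) := Fin (n+1) → ℝ

abbrev Edge (n : ℕ) := Fin (n+1) × Fin (n+1)

abbrev EdgeSet (n : ℕ) := Finset (Edge n)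

/-- The vector `e_i - e_j`. -/
def ev {n : ℕ} (i j : Fin (n+1)) : Vtype n := Pi.single i 1 - Pi.single j 1

/-- Edges are stored as pairs `(i,j)` with `i < j`. -/
def IsGraph {n : ℕ} (E : EdgeSet n) : Prop := ∀ e ∈ E, e.1 < e.2

/-- The simple graph underlying an edge set. -/
def toSG {n : ℕ} (E : EdgeSet n) : SimpleGraph (Fin (n+1)) :=
  SimpleGraph.fromRel (fun a b => (a, b) ∈ E)

def Acyclic {n : ℕ} (E : EdgeSet n) : Prop := (toSG E).IsAcyclic

def IsForest {n : ℕ} (E : EdgeSet n) : Prop := IsGraph E ∧ Acyclic E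

/-- A tree on the full vertex set `[n+1]`: connected and acyclic. -/
def IsTreeG {n : ℕ} (E : EdgeSet n) : Prop := IsGraph E ∧ (toSG E).IsTree

def Noncrossing {n : ℕ} (E : EdgeSet n) : Prop :=
  ¬ ∃ i j k l : Fin (n+1), i < j ∧ j < k ∧ k < l ∧ (i, k) ∈ E ∧ (j, l) ∈ E

def Alternating {n : ℕ} (E : EdgeSet n) : Prop :=
  ¬ ∃ i j k : Fin (n+1), i < j ∧ j < k ∧ (i, j) ∈ E ∧ (j, k) ∈ E

/-- The positive roots `e_i - e_j`, `i < j`. -/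
def PhiPlus (n : ℕ) : Set (Vtype n) := {v | ∃ i j : Fin (n+1), i < j ∧ v = ev i j}

/-- The cone of nonnegative combinations of the vectors of `E`. -/
def cone {n : ℕ} (E : EdgeSet n) : Set (Vtype n) :=
  {x | ∃ c : Edge n → ℝ, (∀ e, 0 ≤ c e) ∧ x = ∑ e ∈ E, c e • ev e.1 e.2}

def Vbar {n : ℕ} (E : EdgeSet n) : Set (Vtype n) := PhiPlus n ∩ cone E

/-- The root polytope of a graph. -/
def RootPoly {n : ℕ} (E : EdgeSet n) : Set (Vtype n) := convexHull ℝ ({0} ∪ Vbar E)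

/-- The full root polytope `P(A_n^+)`. -/
def FullRootPoly (n : ℕ) : Set (Vtype n) := convexHull ℝ ({0} ∪ PhiPlus n)

/-- Transitive closure: `(i,j)`, `i<j`, whenever there is an increasing path in `E`. -/
def closureT {n : ℕ} (E : EdgeSet n) : Set (Edge n) :=
  {p | p.1 < p.2 ∧ Relation.TransGen (fun a b => a < b ∧ (a, b) ∈ E) p.1 p.2}

/-- Noncrossing alternating spanning trees of the transitive closure of `E`. -/
def NCASpanningTrees {n : ℕ} (E : EdgeSet n) : Set (EdgeSet n) :=
  {F | IsTreeG F ∧ Noncrossing F ∧ Alternating F ∧ ↑F ⊆ closureT E}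

/-- The `t`-th dilate of a set. -/
def dilate {n : ℕ} (t : ℕ) (P : Set (Vtype n)) : Set (Vtype n) := (fun x => (t : ℝ) • x) '' P

/-- Number of lattice points of the `t`-th dilate. -/
noncomputable def latticeCount {n : ℕ} (P : Set (Vtype n)) (t : ℕ) : ℕ :=
  Set.ncard {x ∈ dilate t P | ∀ i, ∃ z : ℤ, x i = (z : ℝ)}

/-- Dimension of the affine span of a set. -/
noncomputable def polyDim {n : ℕ} (P : Set (Vtype n)) : ℕ :=
  Module.finrank ℝ (affineSpan ℝ P).direction

/-- The points `0` and `e_i - e_j`, `(i,j) ∈ F`. -/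
def vertSet {n : ℕ} (F : EdgeSet n) : Set (Vtype n) :=
  {0} ∪ {v | ∃ e ∈ F, v = ev e.1 e.2}

/-- A playable route: an increasing vertex sequence whose consecutive pairs are edges. -/
structure PlayableRoute {n : ℕ} (E : EdgeSet n) where
  len : ℕ
  route : Fin (len + 2) → Fin (n+1)
  mono : StrictMono route
  mem : ∀ t : Fin (len + 1), (route t.castSucc, route t.succ) ∈ E

/-- A set is a simplex if it is the convex hull of a finite affinely independent set. -/
def IsSimplex {n : ℕ} (P : Set (Vtype n)) : Prop :=
  ∃ s : Finset (Vtype n),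
    AffineIndependent ℝ (fun x : (s : Set (Vtype n)) => x.1) ∧ P = convexHull ℝ ↑s

/-- The three graphs produced by a reduction at `(i,j), (j,k)`. -/
def red1 {n : ℕ} (E : EdgeSet n) (i j k : Fin (n+1)) : EdgeSet n :=
  insert (i, k) (E.erase (j, k))

def red2 {n : ℕ} (E : EdgeSet n) (i j k : Fin (n+1)) : EdgeSet n :=
  insert (i, k) (E.erase (i, j))

def red3 {n : ℕ} (E : EdgeSet n) (i j k : Fin (n+1)) : EdgeSet n :=
  insert (i, k) ((E.erase (i, j)).erase (j, k))

/-!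
Since `e_i - e_k = (e_i - e_j) + (e_j - e_k)`, comparing the coefficients of the two summands shows
that a reduction splits the cone of `E` into the cones of `red1` and `red2`. Each reduction moves an
edge to a longer one, so repeated reduction ends, and every point of `cone E` lies in the cone of an
alternating graph. There no vertex is both the tail and the head of an edge, so the coefficients of
a point sum to the sum of its coordinates over the tails. Requiring all coordinate sums over vertex
sets to be at most `1` therefore cuts `RootPoly E` out of `cone E`; as this condition does not
mention `E`, unions and intersections of root polytopes are read off from those of the cones.

A graph is acyclic exactly when its roots are linearly independent, and a reduction exchanges one
vector of such a family for another. This gives acyclicity, the dimensions, and the intersection of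
the cones.
-/

section ConeSubdivision

variable {R M : Type*}

lemma mem_hull_insert [Semiring R] [PartialOrder R] [IsOrderedRing R] [AddCommMonoid M]
    [Module R M] {s : Set M} {x y : M} :
    x ∈ PointedCone.hull R (insert y s) ↔
      ∃ a : R, 0 ≤ a ∧ ∃ z ∈ PointedCone.hull R s, x = a • y + z :=
  Submodule.mem_span_insert.trans
    ⟨fun ⟨a, h⟩ => ⟨a, a.2, h⟩, fun ⟨a, ha, h⟩ => ⟨⟨a, ha⟩, h⟩⟩

lemma hull_insert_insert_eq_union [Ring R] [LinearOrder R] [IsOrderedRing R] [AddCommGroup M]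
    [Module R M] (v w : M) (s : Set M) :
    (PointedCone.hull R (insert v (insert w s)) : Set M) =
      (PointedCone.hull R (insert (v + w) (insert v s)) : Set M) ∪
        PointedCone.hull R (insert (v + w) (insert w s)) := by
  refine Set.Subset.antisymm (fun x hx => ?_) (Set.union_subset ?_ ?_)
  · obtain ⟨a, ha, y, hy, rfl⟩ := mem_hull_insert.1 hx
    obtain ⟨b, hb, z, hz, rfl⟩ := mem_hull_insert.1 hy
    rcases le_total b a with hba | hab
    · refine Or.inl (mem_hull_insert.2 ⟨b, hb, (a - b) • v + z,
        mem_hull_insert.2 ⟨a - b, sub_nonneg.2 hba, z, hz, rfl⟩, ?_⟩)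
      rw [sub_smul, smul_add]
      abel
    · refine Or.inr (mem_hull_insert.2 ⟨a, ha, (b - a) • w + z,
        mem_hull_insert.2 ⟨b - a, sub_nonneg.2 hab, z, hz, rfl⟩, ?_⟩)
      rw [sub_smul, smul_add]
      abel
  all_goals
    have hv : v ∈ PointedCone.hull R (insert v (insert w s)) :=
      PointedCone.subset_hull (by simp)
    have hw : w ∈ PointedCone.hull R (insert v (insert w s)) :=
      PointedCone.subset_hull (by simp)
    have hs : s ⊆ PointedCone.hull R (insert v (insert w s)) := fun x hx =>
      PointedCone.subset_hull (by simp [hx])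
    refine Submodule.span_le.2 (Set.insert_subset (add_mem hv hw) (Set.insert_subset ?_ hs))
    assumption

lemma hull_inf_hull_insert_add [Field R] [LinearOrder R] [IsStrictOrderedRing R] [AddCommGroup M]
    [Module R M] {v w : M} {s : Set M} (hv : v ∉ Submodule.span R (insert w s))
    (hw : w ∉ Submodule.span R (insert v s)) :
    PointedCone.hull R (insert (v + w) (insert v s)) ⊓
        PointedCone.hull R (insert (v + w) (insert w s)) =
      PointedCone.hull R (insert (v + w) s) := by
  refine le_antisymm (fun x hx => ?_) (le_inf ?_ ?_)
  · obtain ⟨b, hb, y, hy, rfl⟩ := mem_hull_insert.1 hx.1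
    obtain ⟨a, ha, z, hz, rfl⟩ := mem_hull_insert.1 hy
    obtain ⟨b', -, y', hy', hxy⟩ := mem_hull_insert.1 hx.2
    obtain ⟨a', ha', z', hz', rfl⟩ := mem_hull_insert.1 hy'
    have hzz : z' - z ∈ Submodule.span R s :=
      sub_mem (PointedCone.hull_le_span R s hz') (PointedCone.hull_le_span R s hz)
    have coeff_v : a + b - b' = 0 := by
      by_contra h
      refine hv ((Submodule.smul_mem_iff _ h).1 (Submodule.mem_span_insert.2
        ⟨a' + b' - b, z' - z, hzz, ?_⟩))
      linear_combination (norm := module) hxy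
    have coeff_w : a' + b' - b = 0 := by
      by_contra h
      refine hw ((Submodule.smul_mem_iff _ h).1 (Submodule.mem_span_insert.2
        ⟨a + b - b', z - z', by simpa using neg_mem hzz, ?_⟩))
      linear_combination (norm := module) -hxy
    have ha0 : a = 0 := by linarith
    exact mem_hull_insert.2 ⟨b, hb, z, hz, by simp [ha0]⟩
  all_goals exact Submodule.span_mono (Set.insert_subset_insert (Set.subset_insert _ _))

end ConeSubdivision


section LinearIndependentExchange

variable {ι K V : Type*} [DecidableEq ι] [DivisionRing K] [AddCommGroup V] [Module K V]
  {f : ι → V} {s : Finset ι} {a b : ι}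

lemma notMem_span_image_erase_of_sub_mem (hs : LinearIndepOn K f s) (hb : b ∈ s)
    (hab : f a - f b ∈ Submodule.span K (f '' (s.erase b))) :
    f a ∉ Submodule.span K (f '' (s.erase b)) := by
  intro h
  refine linearIndepOn_iff_notMem_span.1 hs b hb ?_
  rw [← Finset.coe_erase]
  simpa using sub_mem h hab

lemma linearIndepOn_insert_erase (hs : LinearIndepOn K f s) (hb : b ∈ s)
    (hab : f a - f b ∈ Submodule.span K (f '' (s.erase b))) :
    LinearIndepOn K f (insert a (s.erase b) : Finset ι) := by
  rw [Finset.coe_insert]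
  exact (hs.mono (by simp)).insert (notMem_span_image_erase_of_sub_mem hs hb hab)

lemma card_insert_erase (hs : LinearIndepOn K f s) (hb : b ∈ s)
    (hab : f a - f b ∈ Submodule.span K (f '' (s.erase b))) :
    (insert a (s.erase b)).card = s.card := by
  have ha : a ∉ s.erase b := fun h =>
    notMem_span_image_erase_of_sub_mem hs hb hab (Submodule.subset_span ⟨a, h, rfl⟩)
  rw [Finset.card_insert_of_notMem ha, Finset.card_erase_add_one hb]

end LinearIndependentExchange

lemma sum_insert_erase_lt {ι M : Type*} [DecidableEq ι] [AddCommMonoid M] [PartialOrder M]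
    [IsOrderedCancelAddMonoid M] [CanonicallyOrderedAdd M] {s : Finset ι} {a b : ι} {w : ι → M}
    (hb : b ∈ s) (hab : w a < w b) : ∑ e ∈ insert a (s.erase b), w e < ∑ e ∈ s, w e := by
  rw [← Finset.add_sum_erase s w hb]
  by_cases ha : a ∈ s.erase b
  · rw [Finset.insert_eq_of_mem ha]
    exact lt_add_of_pos_left _ (zero_le.trans_lt hab)
  · rw [Finset.sum_insert ha]
    gcongr

lemma sum_smul_mem_of_sum_le_one {ι R M : Type*} [Field R] [LinearOrder R]
    [IsStrictOrderedRing R] [AddCommGroup M] [Module R M] {C : Set M} (hC : Convex R C)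
    (h0 : (0 : M) ∈ C) {t : Finset ι} {c : ι → R} {z : ι → M} (hc : ∀ e ∈ t, 0 ≤ c e)
    (hsum : ∑ e ∈ t, c e ≤ 1) (hz : ∀ e ∈ t, z e ∈ C) : ∑ e ∈ t, c e • z e ∈ C := by
  have hmem := hC.sum_mem (t := t.insertNone)
    (w := fun o : Option ι => o.elim (1 - ∑ e ∈ t, c e) c)
    (z := fun o : Option ι => o.elim 0 z)
    (Finset.forall_mem_insertNone.2 ⟨sub_nonneg.2 hsum, hc⟩) (by simp)
    (Finset.forall_mem_insertNone.2 ⟨h0, hz⟩)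
  simpa using hmem


section RootCone

variable {n : ℕ} {E : EdgeSet n} {i j k : Fin (n + 1)}

/-- The root `e_a - e_b` of the edge `(a, b)`: `ev` as a function of one variable, so that the
vectors of a graph form an indexed family. -/
def edgeVec (e : Edge n) : Vtype n := ev e.1 e.2

lemma edgeVec_add_edgeVec (i j k : Fin (n + 1)) :
    edgeVec (i, j) + edgeVec (j, k) = edgeVec (i, k) :=
  sub_add_sub_cancel _ _ _

/-- The functional `x ↦ ∑_{v ∈ S} x_v`. On a root it measures whether the edge leaves or enters
the vertex set `S`. -/
noncomputable def cutSum (S : Finset (Fin (n + 1))) : Vtype n →ₗ[ℝ] ℝ :=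
  ∑ v ∈ S, LinearMap.proj v

lemma cutSum_ev (S : Finset (Fin (n + 1))) (a b : Fin (n + 1)) :
    cutSum S (ev a b) = (if a ∈ S then 1 else 0) - (if b ∈ S then 1 else 0) := by
  simp [cutSum, ev, Pi.single_apply]

lemma cone_eq_hull (E : EdgeSet n) :
    cone E = PointedCone.hull ℝ (edgeVec '' (E : Set (Edge n))) := by
  ext x
  rw [SetLike.mem_coe, PointedCone.hull, Submodule.mem_span_image_finset_iff_exists_fun']
  constructor
  · rintro ⟨c, hc, rfl⟩
    exact ⟨fun e => ⟨c e, hc e⟩, rfl⟩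
  · rintro ⟨c, rfl⟩
    exact ⟨fun e => c e, fun e => (c e).2, rfl⟩

lemma edgeVec_mem_cone {e : Edge n} (he : e ∈ E) : edgeVec e ∈ cone E := by
  rw [cone_eq_hull]
  exact PointedCone.subset_hull ⟨e, he, rfl⟩

lemma image_erase_left (hij : i ≠ j) (h2 : (j, k) ∈ E) :
    edgeVec '' (E.erase (i, j) : Set (Edge n)) =
      insert (edgeVec (j, k)) (edgeVec '' ((E.erase (i, j)).erase (j, k) : Set (Edge n))) := by
  rw [← Set.image_insert_eq, ← Finset.coe_insert, Finset.insert_erase]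
  simp [hij.symm, h2]

lemma image_erase_right (hij : i ≠ j) (h1 : (i, j) ∈ E) :
    edgeVec '' (E.erase (j, k) : Set (Edge n)) =
      insert (edgeVec (i, j)) (edgeVec '' ((E.erase (i, j)).erase (j, k) : Set (Edge n))) := by
  rw [← Set.image_insert_eq, ← Finset.coe_insert, Finset.erase_right_comm, Finset.insert_erase]
  simp [hij, h1]

lemma image_red1 (hij : i ≠ j) (h1 : (i, j) ∈ E) :
    edgeVec '' (red1 E i j k : Set (Edge n)) =
      insert (edgeVec (i, j) + edgeVec (j, k)) (insert (edgeVec (i, j))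
        (edgeVec '' ((E.erase (i, j)).erase (j, k) : Set (Edge n)))) := by
  rw [red1, Finset.coe_insert, Set.image_insert_eq, image_erase_right hij h1, edgeVec_add_edgeVec]

lemma image_red2 (hij : i ≠ j) (h2 : (j, k) ∈ E) :
    edgeVec '' (red2 E i j k : Set (Edge n)) =
      insert (edgeVec (i, j) + edgeVec (j, k)) (insert (edgeVec (j, k))
        (edgeVec '' ((E.erase (i, j)).erase (j, k) : Set (Edge n)))) := by
  rw [red2, Finset.coe_insert, Set.image_insert_eq, image_erase_left hij h2, edgeVec_add_edgeVec]

lemma cone_eq_cone_red1_union_cone_red2 (hij : i ≠ j) (h1 : (i, j) ∈ E) (h2 : (j, k) ∈ E) :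
    cone E = cone (red1 E i j k) ∪ cone (red2 E i j k) := by
  have himage : edgeVec '' (E : Set (Edge n)) = insert (edgeVec (i, j)) (insert (edgeVec (j, k))
      (edgeVec '' ((E.erase (i, j)).erase (j, k) : Set (Edge n)))) := by
    rw [← image_erase_left hij h2, ← Set.image_insert_eq, ← Finset.coe_insert,
      Finset.insert_erase h1]
  rw [cone_eq_hull, cone_eq_hull, cone_eq_hull, himage, image_red1 hij h1, image_red2 hij h2,
    hull_insert_insert_eq_union]

lemma cone_red1_inter_cone_red2 (hij : i ≠ j) (h1 : (i, j) ∈ E) (h2 : (j, k) ∈ E)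
    (hLI : LinearIndepOn ℝ edgeVec (E : Set (Edge n))) :
    cone (red1 E i j k) ∩ cone (red2 E i j k) = cone (red3 E i j k) := by
  have hij_notMem := linearIndepOn_iff_notMem_span.1 hLI _ h1
  have hjk_notMem := linearIndepOn_iff_notMem_span.1 hLI _ h2
  rw [← Finset.coe_erase, image_erase_left hij h2] at hij_notMem
  rw [← Finset.coe_erase, image_erase_right hij h1] at hjk_notMem
  rw [cone_eq_hull, cone_eq_hull, cone_eq_hull, image_red1 hij h1, image_red2 hij h2,
    ← Submodule.coe_inf, hull_inf_hull_insert_add hij_notMem hjk_notMem, red3, Finset.coe_insert,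
    Set.image_insert_eq, edgeVec_add_edgeVec]

lemma IsGraph.red1 (hE : IsGraph E) (hik : i < k) : IsGraph (red1 E i j k) :=
  Finset.forall_mem_insert _ _ _ |>.2 ⟨hik, fun e he => hE e (Finset.mem_of_mem_erase he)⟩

lemma IsGraph.red2 (hE : IsGraph E) (hik : i < k) : IsGraph (red2 E i j k) :=
  Finset.forall_mem_insert _ _ _ |>.2 ⟨hik, fun e he => hE e (Finset.mem_of_mem_erase he)⟩

lemma IsGraph.red3 (hE : IsGraph E) (hik : i < k) : IsGraph (red3 E i j k) :=
  Finset.forall_mem_insert _ _ _ |>.2 ⟨hik, fun e he =>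
    hE e (Finset.mem_of_mem_erase (Finset.mem_of_mem_erase he))⟩

end RootCone

section RootPolytope

variable {n : ℕ} {E F : EdgeSet n} {x : Vtype n} {i j k : Fin (n + 1)}

/-- The number of vertices outside an edge `(a, b)`, `a < b`, when the edge is viewed as an
interval. Summed over the edges of a graph it drops at every reduction. -/
def colength (e : Edge n) : ℕ := e.1 + e.2.rev

lemma sum_colength_red1_lt (hij : i < j) (h2 : (j, k) ∈ E) :
    ∑ e ∈ red1 E i j k, colength e < ∑ e ∈ E, colength e :=
  sum_insert_erase_lt h2 (Nat.add_lt_add_right hij _)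

lemma sum_colength_red2_lt (hjk : j < k) (h1 : (i, j) ∈ E) :
    ∑ e ∈ red2 E i j k, colength e < ∑ e ∈ E, colength e :=
  sum_insert_erase_lt h1 (Nat.add_lt_add_left (Fin.rev_lt_rev.2 hjk) _)

lemma exists_alternating_cone_subset (hE : IsGraph E) (hx : x ∈ cone E) :
    ∃ F, IsGraph F ∧ Alternating F ∧ cone F ⊆ cone E ∧ x ∈ cone F := by
  induction hw : ∑ e ∈ E, colength e using Nat.strong_induction_on generalizing E with
  | _ w ih =>
    subst hw
    by_cases halt : Alternating E
    · exact ⟨E, hE, halt, subset_rfl, hx⟩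
    obtain ⟨i, j, k, hij, hjk, h1, h2⟩ := not_not.1 halt
    have hunion := cone_eq_cone_red1_union_cone_red2 hij.ne h1 h2
    rcases hunion ▸ hx with hx | hx
    · obtain ⟨F, hF, hFalt, hFE, hxF⟩ :=
        ih _ (sum_colength_red1_lt hij h2) (hE.red1 (hij.trans hjk)) hx rfl
      exact ⟨F, hF, hFalt, hFE.trans (hunion ▸ Set.subset_union_left), hxF⟩
    · obtain ⟨F, hF, hFalt, hFE, hxF⟩ :=
        ih _ (sum_colength_red2_lt hjk h1) (hE.red2 (hij.trans hjk)) hx rfl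
      exact ⟨F, hF, hFalt, hFE.trans (hunion ▸ Set.subset_union_right), hxF⟩

lemma zero_mem_rootPoly (E : EdgeSet n) : 0 ∈ RootPoly E :=
  subset_convexHull ℝ _ (Or.inl rfl)

lemma edgeVec_mem_rootPoly (hE : IsGraph E) {e : Edge n} (he : e ∈ E) : edgeVec e ∈ RootPoly E :=
  subset_convexHull ℝ _ (Or.inr ⟨⟨e.1, e.2, hE e he, rfl⟩, edgeVec_mem_cone he⟩)

lemma rootPoly_mono (h : cone F ⊆ cone E) : RootPoly F ⊆ RootPoly E :=
  convexHull_mono (Set.union_subset_union_right _ (Set.inter_subset_inter_right _ h))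

/-- The polyhedron of all vectors whose coordinate sums over sets of vertices are at most `1`. It
cuts the root polytope of any graph out of the cone of the graph. -/
def cutRegion (n : ℕ) : Set (Vtype n) := {x | ∀ S, cutSum S x ≤ 1}

lemma convex_cutRegion (n : ℕ) : Convex ℝ (cutRegion n) := by
  rw [cutRegion, Set.ofPred_forall]
  exact convex_iInter fun S => convex_halfSpace_le (cutSum S).isLinear 1

lemma ev_mem_cutRegion (a b : Fin (n + 1)) : ev a b ∈ cutRegion n := by
  intro S
  rw [cutSum_ev]
  split_ifs <;> norm_num

lemma Alternating.cone_inter_cutRegion_subset (hF : Alternating F) (hFg : IsGraph F) :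
    cone F ∩ cutRegion n ⊆ RootPoly F := by
  rintro _ ⟨⟨c, hc, rfl⟩, hcut⟩
  have htail : ∀ e ∈ F, cutSum (F.image Prod.fst) (ev e.1 e.2) = 1 := by
    intro e he
    have hfst : e.1 ∈ F.image Prod.fst := Finset.mem_image_of_mem _ he
    have hsnd : e.2 ∉ F.image Prod.fst := by
      intro h
      obtain ⟨f, hf, hfe⟩ := Finset.mem_image.1 h
      exact hF ⟨e.1, e.2, f.2, hFg e he, hfe ▸ hFg f hf, he, hfe ▸ hf⟩
    rw [cutSum_ev, if_pos hfst, if_neg hsnd, sub_zero]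
  have hsum : ∑ e ∈ F, c e ≤ 1 := calc
    ∑ e ∈ F, c e = cutSum (F.image Prod.fst) (∑ e ∈ F, c e • ev e.1 e.2) := by
      rw [map_sum]
      exact Finset.sum_congr rfl fun e he => by rw [map_smul, htail e he, smul_eq_mul, mul_one]
    _ ≤ 1 := hcut _
  exact sum_smul_mem_of_sum_le_one (convex_convexHull ℝ _) (zero_mem_rootPoly F)
    (fun e _ => hc e) hsum fun e he => edgeVec_mem_rootPoly hFg he

theorem rootPoly_eq_cone_inter_cutRegion (hE : IsGraph E) :
    RootPoly E = cone E ∩ cutRegion n := by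
  refine Set.Subset.antisymm (convexHull_min ?_ ?_) ?_
  · rintro x (rfl | ⟨⟨a, b, -, rfl⟩, hx⟩)
    · exact ⟨by simp [cone_eq_hull], fun S => by simp⟩
    · exact ⟨hx, ev_mem_cutRegion a b⟩
  · rw [cone_eq_hull]
    exact (PointedCone.convex _).inter (convex_cutRegion n)
  · rintro x ⟨hx, hcut⟩
    obtain ⟨F, hF, hFalt, hFE, hxF⟩ := exists_alternating_cone_subset hE hx
    exact rootPoly_mono hFE (hFalt.cone_inter_cutRegion_subset hF ⟨hxF, hcut⟩)

theorem polyDim_rootPoly (hE : IsGraph E) (hLI : LinearIndepOn ℝ edgeVec (E : Set (Edge n))) :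
    polyDim (RootPoly E) = E.card := by
  have hdir : (affineSpan ℝ (RootPoly E)).direction =
      Submodule.span ℝ (edgeVec '' (E : Set (Edge n))) := by
    rw [direction_affineSpan, vectorSpan_eq_span_vsub_set_right ℝ (zero_mem_rootPoly E)]
    simp only [vsub_eq_sub, sub_zero, Set.image_id']
    refine le_antisymm (Submodule.span_le.2 fun x hx => ?_) (Submodule.span_mono ?_)
    · rw [rootPoly_eq_cone_inter_cutRegion hE, cone_eq_hull] at hx
      exact PointedCone.hull_le_span ℝ _ hx.1
    · rintro _ ⟨e, he, rfl⟩
      exact edgeVec_mem_rootPoly hE he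
  rw [polyDim, hdir, Set.image_eq_range]
  simpa using finrank_span_eq_card hLI

end RootPolytope

section Acyclic

variable {n : ℕ} {E : EdgeSet n} {a b i j k : Fin (n + 1)}

lemma toSG_adj : (toSG E).Adj a b ↔ a ≠ b ∧ ((a, b) ∈ E ∨ (b, a) ∈ E) :=
  SimpleGraph.fromRel_adj _ _ _

lemma toSG_erase (hE : IsGraph E) (hab : a < b) :
    toSG (E.erase (a, b)) = (toSG E).deleteEdges {s(a, b)} := by
  ext u v
  have huv := hE (u, v)
  have hvu := hE (v, u)
  simp only [toSG_adj, SimpleGraph.deleteEdges_adj, Finset.mem_erase, ne_eq, Prod.mk.injEq,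
    Set.mem_singleton_iff, Sym2.eq_iff]
  grind

lemma ev_mem_span_of_reachable (h : (toSG E).Reachable a b) :
    ev a b ∈ Submodule.span ℝ (edgeVec '' (E : Set (Edge n))) := by
  obtain ⟨p⟩ := h
  induction p with
  | nil => simp [ev]
  | @cons u v w huv _ ih =>
    rw [← show edgeVec (u, v) + edgeVec (v, w) = ev u w from edgeVec_add_edgeVec u v w]
    refine add_mem ?_ ih
    rcases (toSG_adj.1 huv).2 with he | he
    · exact Submodule.subset_span ⟨(u, v), he, rfl⟩
    · rw [edgeVec, ev, ← neg_sub]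
      exact neg_mem (Submodule.subset_span ⟨(v, u), he, rfl⟩)

lemma reachable_of_ev_mem_span
    (h : ev a b ∈ Submodule.span ℝ (edgeVec '' (E : Set (Edge n)))) :
    (toSG E).Reachable a b := by
  classical
  let S : Finset (Fin (n + 1)) := {v | (toSG E).Reachable a v}
  have hker : Submodule.span ℝ (edgeVec '' (E : Set (Edge n))) ≤ LinearMap.ker (cutSum S) := by
    rw [Submodule.span_le]
    rintro _ ⟨⟨p, q⟩, hpq, rfl⟩
    rcases eq_or_ne p q with rfl | hne
    · simp [edgeVec, ev]
    have hadj : (toSG E).Adj p q := toSG_adj.2 ⟨hne, Or.inl hpq⟩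
    have hiff : p ∈ S ↔ q ∈ S := by
      simp only [S, Finset.mem_filter_univ]
      exact ⟨fun h => h.trans hadj.reachable, fun h => h.trans hadj.symm.reachable⟩
    simp [edgeVec, cutSum_ev, hiff]
  by_contra hab
  have hcut : cutSum S (ev a b) = 0 := hker h
  simp [cutSum_ev, S, hab] at hcut

theorem acyclic_iff_linearIndepOn (hE : IsGraph E) :
    Acyclic E ↔ LinearIndepOn ℝ edgeVec (E : Set (Edge n)) := by
  have hbridge : ∀ e ∈ E, (toSG E).IsBridge s(e.1, e.2) ↔
      edgeVec e ∉ Submodule.span ℝ (edgeVec '' (E \ {e} : Set (Edge n))) := by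
    intro e he
    rw [SimpleGraph.isBridge_iff, ← toSG_erase hE (hE e he), ← Finset.coe_erase]
    exact not_congr ⟨ev_mem_span_of_reachable, reachable_of_ev_mem_span⟩
  rw [linearIndepOn_iff_notMem_span, Acyclic, SimpleGraph.isAcyclic_iff_forall_adj_isBridge]
  refine ⟨fun h e he => (hbridge e he).1 (h (toSG_adj.2 ⟨(hE e he).ne, Or.inl he⟩)),
    fun h u v huv => ?_⟩
  rcases (toSG_adj.1 huv).2 with he | he
  · exact (hbridge _ he).2 (h _ he)
  · rw [Sym2.eq_swap]
    exact (hbridge _ he).2 (h _ he)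

end Acyclic

section Reduction

variable {n : ℕ} {E : EdgeSet n} {i j k : Fin (n + 1)}

lemma edgeVec_sub_mem_span_erase_right (hij : i ≠ j) (h1 : (i, j) ∈ E) :
    edgeVec (i, k) - edgeVec (j, k) ∈
      Submodule.span ℝ (edgeVec '' (E.erase (j, k) : Set (Edge n))) := by
  rw [← edgeVec_add_edgeVec i j k, add_sub_cancel_right, image_erase_right hij h1]
  exact Submodule.subset_span (Set.mem_insert _ _)

lemma edgeVec_sub_mem_span_erase_left (hij : i ≠ j) (h2 : (j, k) ∈ E) :
    edgeVec (i, k) - edgeVec (i, j) ∈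
      Submodule.span ℝ (edgeVec '' (E.erase (i, j) : Set (Edge n))) := by
  rw [← edgeVec_add_edgeVec i j k, add_sub_cancel_left, image_erase_left hij h2]
  exact Submodule.subset_span (Set.mem_insert _ _)

lemma red1_erase (hjk : j ≠ k) : (red1 E i j k).erase (i, j) = red3 E i j k := by
  rw [red1, red3, Finset.erase_insert_of_ne (by simpa using hjk.symm), Finset.erase_right_comm]

lemma linearIndepOn_red1 (hLI : LinearIndepOn ℝ edgeVec (E : Set (Edge n))) (hij : i ≠ j)
    (h1 : (i, j) ∈ E) (h2 : (j, k) ∈ E) :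
    LinearIndepOn ℝ edgeVec (red1 E i j k : Set (Edge n)) :=
  linearIndepOn_insert_erase hLI h2 (edgeVec_sub_mem_span_erase_right hij h1)

lemma linearIndepOn_red2 (hLI : LinearIndepOn ℝ edgeVec (E : Set (Edge n))) (hij : i ≠ j)
    (h1 : (i, j) ∈ E) (h2 : (j, k) ∈ E) :
    LinearIndepOn ℝ edgeVec (red2 E i j k : Set (Edge n)) :=
  linearIndepOn_insert_erase hLI h1 (edgeVec_sub_mem_span_erase_left hij h2)

lemma linearIndepOn_red3 (hLI : LinearIndepOn ℝ edgeVec (E : Set (Edge n))) (hij : i ≠ j)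
    (hjk : j ≠ k) (h1 : (i, j) ∈ E) (h2 : (j, k) ∈ E) :
    LinearIndepOn ℝ edgeVec (red3 E i j k : Set (Edge n)) := by
  rw [← red1_erase hjk]
  exact (linearIndepOn_red1 hLI hij h1 h2).mono (Finset.coe_subset.2 (Finset.erase_subset _ _))

lemma card_red1 (hLI : LinearIndepOn ℝ edgeVec (E : Set (Edge n))) (hij : i ≠ j)
    (h1 : (i, j) ∈ E) (h2 : (j, k) ∈ E) : (red1 E i j k).card = E.card :=
  card_insert_erase hLI h2 (edgeVec_sub_mem_span_erase_right hij h1)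

lemma card_red2 (hLI : LinearIndepOn ℝ edgeVec (E : Set (Edge n))) (hij : i ≠ j)
    (h1 : (i, j) ∈ E) (h2 : (j, k) ∈ E) : (red2 E i j k).card = E.card :=
  card_insert_erase hLI h1 (edgeVec_sub_mem_span_erase_left hij h2)

lemma card_red3 (hLI : LinearIndepOn ℝ edgeVec (E : Set (Edge n))) (hij : i ≠ j)
    (hjk : j ≠ k) (h1 : (i, j) ∈ E) (h2 : (j, k) ∈ E) :
    (red3 E i j k).card = E.card - 1 := by
  rw [← red1_erase hjk, Finset.card_erase_of_mem, card_red1 hLI hij h1 h2]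
  exact Finset.mem_insert_of_mem (Finset.mem_erase.2 ⟨by simp [hij], h1⟩)

theorem rootPoly_eq_rootPoly_red1_union_rootPoly_red2 (hE : IsGraph E) (hij : i < j) (hjk : j < k)
    (h1 : (i, j) ∈ E) (h2 : (j, k) ∈ E) :
    RootPoly E = RootPoly (red1 E i j k) ∪ RootPoly (red2 E i j k) := by
  have hik := hij.trans hjk
  rw [rootPoly_eq_cone_inter_cutRegion hE, rootPoly_eq_cone_inter_cutRegion (hE.red1 hik),
    rootPoly_eq_cone_inter_cutRegion (hE.red2 hik),
    cone_eq_cone_red1_union_cone_red2 hij.ne h1 h2, Set.union_inter_distrib_right]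

theorem rootPoly_red1_inter_rootPoly_red2 (hE : IsGraph E)
    (hLI : LinearIndepOn ℝ edgeVec (E : Set (Edge n))) (hij : i < j) (hjk : j < k)
    (h1 : (i, j) ∈ E) (h2 : (j, k) ∈ E) :
    RootPoly (red1 E i j k) ∩ RootPoly (red2 E i j k) = RootPoly (red3 E i j k) := by
  have hik := hij.trans hjk
  rw [rootPoly_eq_cone_inter_cutRegion (hE.red1 hik),
    rootPoly_eq_cone_inter_cutRegion (hE.red2 hik), rootPoly_eq_cone_inter_cutRegion (hE.red3 hik),
    ← Set.inter_inter_distrib_right, cone_red1_inter_cone_red2 hij.ne h1 h2 hLI]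

end Reduction

/- STATEMENT 6 -/
theorem stmt6 {n : ℕ} (hn : 1 ≤ n) (E : EdgeSet n) (hE : IsGraph E) (hac : Acyclic E)
    (d : ℕ) (hd : E.card = d) (i j k : Fin (n+1)) (hij : i < j) (hjk : j < k)
    (h1 : (i, j) ∈ E) (h2 : (j, k) ∈ E) :
    (Acyclic (red1 E i j k) ∧ Acyclic (red2 E i j k) ∧ Acyclic (red3 E i j k)) ∧
    RootPoly E = RootPoly (red1 E i j k) ∪ RootPoly (red2 E i j k) ∧
    (polyDim (RootPoly E) = d ∧ polyDim (RootPoly (red1 E i j k)) = d ∧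
      polyDim (RootPoly (red2 E i j k)) = d) ∧
    RootPoly (red3 E i j k) = RootPoly (red1 E i j k) ∩ RootPoly (red2 E i j k) ∧
    polyDim (RootPoly (red3 E i j k)) = d - 1 := by
  have hik : i < k := hij.trans hjk
  have hLI : LinearIndepOn ℝ edgeVec (E : Set (Edge n)) := (acyclic_iff_linearIndepOn hE).1 hac
  have hLI1 := linearIndepOn_red1 hLI hij.ne h1 h2
  have hLI2 := linearIndepOn_red2 hLI hij.ne h1 h2
  have hLI3 := linearIndepOn_red3 hLI hij.ne hjk.ne h1 h2
  refine ⟨⟨(acyclic_iff_linearIndepOn (hE.red1 hik)).2 hLI1,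
      (acyclic_iff_linearIndepOn (hE.red2 hik)).2 hLI2,
      (acyclic_iff_linearIndepOn (hE.red3 hik)).2 hLI3⟩,
    rootPoly_eq_rootPoly_red1_union_rootPoly_red2 hE hij hjk h1 h2, ⟨?_, ?_, ?_⟩,
    (rootPoly_red1_inter_rootPoly_red2 hE hLI hij hjk h1 h2).symm, ?_⟩
  · rw [polyDim_rootPoly hE hLI, hd]
  · rw [polyDim_rootPoly (hE.red1 hik) hLI1, card_red1 hLI hij.ne h1 h2, hd]
  · rw [polyDim_rootPoly (hE.red2 hik) hLI2, card_red2 hLI hij.ne h1 h2, hd]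
  · rw [polyDim_rootPoly (hE.red3 hik) hLI3, card_red3 hLI hij.ne hjk.ne h1 h2, hd]

end RPaper
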